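/- Let D ∈ ℝ^{(n+d)×(n+d)} be symmetric positive definite and B̃ ∈ ℝ^{n×(n+d)}. Define λ_ker = min over unit vectors v in ker(B̃) of vᵀDv, and σ_B̃² = min over unit vectors v in the row space of B̃ of vᵀB̃ᵀB̃v. Then for any η ≥ 0, λ_min(D + η B̃ᵀB̃) > λ_ker · min(1/8, η σ_B̃² / (8 λ_max(D))). -/

import Mathlib

open Matrix

/-!
Split a unit vector as `v = p + r` with `p ∈ ker B` and `r ⟂ ker B`, and write `Q` for the quadratic
form of `D`. Positivity of `Q` gives `Q p ≤ 2 Q v + 2 Q r`, hence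
`λ_ker ≤ λ_ker ‖p‖² + λ_max ‖r‖² ≤ 2 Q v + 3 λ_max ‖r‖²`. Scaled by
`min (1/8) (η σ² / (8 λ_max))`, the first summand stays strictly below `Q v` and the second stays
below `η σ² ‖r‖² ≤ η ‖B r‖² = η ‖B v‖²`.
-/

open RCLike

section UnitValues

variable {𝕜 E : Type*} [RCLike 𝕜] [NormedAddCommGroup E] [NormedSpace 𝕜 E]

/-- The values of `q` at the unit vectors of the subspace `K`. For a quadratic form `q` these are
the Rayleigh quotients of `q` over `K`, whose extrema are the constants `λ` and `σ²` of the
theorem. -/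
def unitValues (q : E → ℝ) (K : Submodule 𝕜 E) : Set ℝ :=
  {x | ∃ v ∈ K, ‖v‖ = 1 ∧ x = q v}

variable {q : E → ℝ} {K : Submodule 𝕜 E} {c : ℝ} {v : E}

lemma exists_mem_unitValues_eq_mul (hq : ∀ (a : 𝕜) (w : E), q (a • w) = ‖a‖ ^ 2 * q w)
    (hv : v ∈ K) (hv₀ : v ≠ 0) : ∃ x ∈ unitValues q K, q v = x * ‖v‖ ^ 2 := by
  refine ⟨_, ⟨(‖v‖⁻¹ : 𝕜) • v, K.smul_mem _ hv, norm_smul_inv_norm hv₀, rfl⟩, ?_⟩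
  have : ‖v‖ ≠ 0 := norm_ne_zero_iff.2 hv₀
  rw [hq, norm_inv, norm_ofReal, abs_norm]
  field_simp

lemma mul_norm_sq_le_of_mem_lowerBounds_unitValues
    (hq : ∀ (a : 𝕜) (w : E), q (a • w) = ‖a‖ ^ 2 * q w)
    (hc : c ∈ lowerBounds (unitValues q K)) (hv : v ∈ K) : c * ‖v‖ ^ 2 ≤ q v := by
  rcases eq_or_ne v 0 with rfl | hv₀
  · simpa using (hq 0 0).ge
  · obtain ⟨x, hx, hqv⟩ := exists_mem_unitValues_eq_mul hq hv hv₀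
    rw [hqv]
    gcongr
    exact hc hx

lemma le_mul_norm_sq_of_mem_upperBounds_unitValues
    (hq : ∀ (a : 𝕜) (w : E), q (a • w) = ‖a‖ ^ 2 * q w)
    (hc : c ∈ upperBounds (unitValues q K)) (hv : v ∈ K) : q v ≤ c * ‖v‖ ^ 2 := by
  rcases eq_or_ne v 0 with rfl | hv₀
  · simpa using (hq 0 0).le
  · obtain ⟨x, hx, hqv⟩ := exists_mem_unitValues_eq_mul hq hv hv₀
    rw [hqv]
    gcongr
    exact hc hx

lemma unitValues_mono {L : Submodule 𝕜 E} (h : K ≤ L) : unitValues q K ⊆ unitValues q L :=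
  fun _ ⟨v, hv, hv₁, hx⟩ ↦ ⟨v, h hv, hv₁, hx⟩

lemma nonneg_of_isGLB_unitValues (hc : IsGLB (unitValues q K) c) (hq : ∀ v, 0 ≤ q v) : 0 ≤ c :=
  hc.2 fun _ ⟨v, _, _, hx⟩ ↦ hx ▸ hq v

end UnitValues

section InnerProductSpace

variable {𝕜 E : Type*} [RCLike 𝕜] [NormedAddCommGroup E] [InnerProductSpace 𝕜 E]

lemma re_inner_map_smul_self (D : E →ₗ[𝕜] E) (a : 𝕜) (v : E) :
    re (inner 𝕜 (D (a • v)) (a • v)) = ‖a‖ ^ 2 * re (inner 𝕜 (D v) v) := by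
  rw [map_smul, inner_smul_left, inner_smul_right, ← mul_assoc, RCLike.conj_mul, ← ofReal_pow,
    re_ofReal_mul]

lemma re_inner_map_self_parallelogram (D : E →ₗ[𝕜] E) (x y : E) :
    re (inner 𝕜 (D (x + y)) (x + y)) + re (inner 𝕜 (D (x - y)) (x - y)) =
      2 * re (inner 𝕜 (D x) x) + 2 * re (inner 𝕜 (D y) y) := by
  simp only [map_add, map_sub, inner_add_left, inner_add_right, inner_sub_left, inner_sub_right]
  ring

lemma re_inner_map_self_le_two_mul_add {D : E →ₗ[𝕜] E} (hD : ∀ v, 0 ≤ re (inner 𝕜 (D v) v))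
    (x y : E) :
    re (inner 𝕜 (D x) x) ≤
      2 * re (inner 𝕜 (D (x + y)) (x + y)) + 2 * re (inner 𝕜 (D y) y) := by
  have h := re_inner_map_self_parallelogram D (x + y) y
  rw [add_sub_cancel_right] at h
  linarith [hD (x + y + y)]

lemma mul_norm_add_sq_le_two_mul_re_inner_map_self_add {D : E →ₗ[𝕜] E} {K : Submodule 𝕜 E}
    {κ L : ℝ} {p r : E} (hD : ∀ v, 0 ≤ re (inner 𝕜 (D v) v))
    (hκ : κ ∈ lowerBounds (unitValues (fun v ↦ re (inner 𝕜 (D v) v)) K))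
    (hL : L ∈ upperBounds (unitValues (fun v ↦ re (inner 𝕜 (D v) v)) (⊤ : Submodule 𝕜 E)))
    (hκL : κ ≤ L) (hp : p ∈ K) (hr : r ∈ Kᗮ) :
    κ * ‖p + r‖ ^ 2 ≤ 2 * re (inner 𝕜 (D (p + r)) (p + r)) + 3 * L * ‖r‖ ^ 2 := by
  have pythagoras : ‖p + r‖ ^ 2 = ‖p‖ ^ 2 + ‖r‖ ^ 2 := by
    simpa only [sq] using
      norm_add_sq_eq_norm_sq_add_norm_sq_of_inner_eq_zero p r (hr p hp)
  have hκp : κ * ‖p‖ ^ 2 ≤ re (inner 𝕜 (D p) p) :=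
    mul_norm_sq_le_of_mem_lowerBounds_unitValues (re_inner_map_smul_self D) hκ hp
  have hLr : re (inner 𝕜 (D r) r) ≤ L * ‖r‖ ^ 2 :=
    le_mul_norm_sq_of_mem_upperBounds_unitValues (re_inner_map_smul_self D) hL Submodule.mem_top
  calc κ * ‖p + r‖ ^ 2 = κ * ‖p‖ ^ 2 + κ * ‖r‖ ^ 2 := by rw [pythagoras, mul_add]
    _ ≤ re (inner 𝕜 (D p) p) + L * ‖r‖ ^ 2 := by gcongr
    _ ≤ 2 * re (inner 𝕜 (D (p + r)) (p + r)) + 3 * L * ‖r‖ ^ 2 := by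
      linarith [re_inner_map_self_le_two_mul_add hD p r]

end InnerProductSpace

lemma mul_min_lt_add_of_le_add {κ L Q s b : ℝ} (hL : 0 < L) (hQ : 0 < Q) (hs : 0 ≤ s)
    (hb : 0 ≤ b) (h : κ ≤ 2 * Q + 3 * L * b) :
    κ * min (1 / 8) (s / (8 * L)) < Q + s * b := by
  set m := min (1 / 8) (s / (8 * L))
  have hm : 0 ≤ m := le_min (by norm_num) (by positivity)
  have hmQ : m * Q ≤ 1 / 8 * Q := by gcongr; exact min_le_left _ _
  have hmL : m * (8 * L) ≤ s := (le_div_iff₀ (by positivity)).1 (min_le_right _ _)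
  calc κ * m ≤ (2 * Q + 3 * L * b) * m := mul_le_mul_of_nonneg_right h hm
    _ = 2 * (m * Q) + 3 / 8 * (m * (8 * L) * b) := by ring
    _ ≤ 2 * (1 / 8 * Q) + 3 / 8 * (s * b) := by gcongr
    _ < Q + s * b := by nlinarith [mul_nonneg hs hb]

theorem stmt8_general {𝕜 E F : Type*} [RCLike 𝕜] [NormedAddCommGroup E] [InnerProductSpace 𝕜 E]
    [SeminormedAddCommGroup F] [NormedSpace 𝕜 F] (D : E →ₗ[𝕜] E) (B : E →ₗ[𝕜] F)
    [B.ker.HasOrthogonalProjection] (hD : ∀ v, v ≠ 0 → 0 < re (inner 𝕜 (D v) v))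
    {η lamKer sigB lamMin lamMax : ℝ} (hη : 0 ≤ η)
    (hker : IsGLB (unitValues (fun v ↦ re (inner 𝕜 (D v) v)) B.ker) lamKer)
    (hsig : IsGLB (unitValues (fun v ↦ ‖B v‖ ^ 2) B.kerᗮ) sigB)
    (hmin : IsLeast (unitValues (fun v ↦ re (inner 𝕜 (D v) v) + η * ‖B v‖ ^ 2)
      (⊤ : Submodule 𝕜 E)) lamMin)
    (hmax : IsLUB (unitValues (fun v ↦ re (inner 𝕜 (D v) v)) (⊤ : Submodule 𝕜 E)) lamMax) :
    lamKer * min (1 / 8) (η * sigB / (8 * lamMax)) < lamMin := by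
  have hD' : ∀ v, 0 ≤ re (inner 𝕜 (D v) v) := fun v ↦ by
    rcases eq_or_ne v 0 with rfl | hv
    exacts [by simp, (hD v hv).le]
  have hB : ∀ (a : 𝕜) (v : E), ‖B (a • v)‖ ^ 2 = ‖a‖ ^ 2 * ‖B v‖ ^ 2 := fun a v ↦ by
    rw [map_smul, norm_smul, mul_pow]
  obtain ⟨v, -, hv₁, rfl⟩ := hmin.1
  have hQ : 0 < re (inner 𝕜 (D v) v) := hD v (norm_ne_zero_iff.1 (by simp [hv₁]))
  have hmax₀ : 0 < lamMax := hQ.trans_le (hmax.1 ⟨v, Submodule.mem_top, hv₁, rfl⟩)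
  have hsig₀ : 0 ≤ sigB := nonneg_of_isGLB_unitValues hsig fun v ↦ sq_nonneg ‖B v‖
  have hker_max : lamKer ≤ lamMax :=
    have ⟨_, hx⟩ := hker.nonempty
    (hker.1 hx).trans (hmax.1 (unitValues_mono le_top hx))
  obtain ⟨p, hp, r, hr, rfl⟩ := B.ker.exists_add_mem_mem_orthogonal v
  have hBr : B (p + r) = B r := by rw [map_add, LinearMap.mem_ker.1 hp, zero_add]
  have hsig_r : sigB * ‖r‖ ^ 2 ≤ ‖B r‖ ^ 2 :=
    mul_norm_sq_le_of_mem_lowerBounds_unitValues hB hsig.1 hr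
  have hker_le := mul_norm_add_sq_le_two_mul_re_inner_map_self_add hD' hker.1 hmax.1 hker_max hp hr
  rw [hv₁, one_pow, mul_one] at hker_le
  calc lamKer * min (1 / 8) (η * sigB / (8 * lamMax))
      < re (inner 𝕜 (D (p + r)) (p + r)) + η * sigB * ‖r‖ ^ 2 :=
        mul_min_lt_add_of_le_add hmax₀ hQ (mul_nonneg hη hsig₀) (sq_nonneg _) hker_le
    _ ≤ re (inner 𝕜 (D (p + r)) (p + r)) + η * ‖B (p + r)‖ ^ 2 := by
        rw [hBr, mul_assoc]
        gcongr

section Matrix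

variable {m n : Type*} [Fintype n]

lemma norm_toLp_eq_one_iff (v : n → ℝ) : ‖WithLp.toLp 2 v‖ = 1 ↔ v ⬝ᵥ v = 1 := by
  simp [EuclideanSpace.norm_eq, dotProduct, sq]

lemma unitValues_euclideanSpace (q : EuclideanSpace ℝ n → ℝ)
    (K : Submodule ℝ (EuclideanSpace ℝ n)) :
    unitValues q K =
      {x | ∃ v : n → ℝ, v ⬝ᵥ v = 1 ∧ WithLp.toLp 2 v ∈ K ∧ x = q (WithLp.toLp 2 v)} := by
  ext x
  simp only [unitValues, (WithLp.toLp_surjective 2).exists, norm_toLp_eq_one_iff,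
    Set.mem_ofPred_eq, and_left_comm]

variable [DecidableEq n]

lemma inner_toEuclideanLin_toLp_self (A : Matrix n n ℝ) (v : n → ℝ) :
    inner ℝ (A.toEuclideanLin (WithLp.toLp 2 v)) (WithLp.toLp 2 v) = v ⬝ᵥ A *ᵥ v := by
  rw [toLpLin_toLp, EuclideanSpace.inner_toLp_toLp, star_trivial, toLin'_apply]

lemma norm_toEuclideanLin_toLp_sq [Fintype m] (B : Matrix m n ℝ) (v : n → ℝ) :
    ‖B.toEuclideanLin (WithLp.toLp 2 v)‖ ^ 2 = v ⬝ᵥ (Bᵀ * B) *ᵥ v := by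
  rw [← real_inner_self_eq_norm_sq, toLpLin_toLp, EuclideanSpace.inner_toLp_toLp,
    star_trivial, toLin'_apply, ← mulVec_mulVec, dotProduct_mulVec v, vecMul_transpose]

lemma toLp_mem_ker_toEuclideanLin {B : Matrix m n ℝ} {v : n → ℝ} :
    WithLp.toLp 2 v ∈ B.toEuclideanLin.ker ↔ B *ᵥ v = 0 := by
  rw [LinearMap.mem_ker, toLpLin_toLp, toLin'_apply, WithLp.toLp_eq_zero]

lemma toLp_mem_ker_toEuclideanLin_orthogonal {B : Matrix m n ℝ} {v : n → ℝ} :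
    WithLp.toLp 2 v ∈ B.toEuclideanLin.kerᗮ ↔ ∀ w, B *ᵥ w = 0 → v ⬝ᵥ w = 0 := by
  simp only [Submodule.mem_orthogonal, (WithLp.toLp_surjective 2).forall,
    toLp_mem_ker_toEuclideanLin, EuclideanSpace.inner_toLp_toLp, star_trivial]

lemma re_inner_toEuclideanLin_self_pos {D : Matrix n n ℝ} (hD : D.PosDef)
    {v : EuclideanSpace ℝ n} (hv : v ≠ 0) : 0 < re (inner ℝ (D.toEuclideanLin v) v) := by
  have h := hD.dotProduct_mulVec_pos ((WithLp.ofLp_eq_zero 2).not.2 hv)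
  rwa [star_trivial, ← inner_toEuclideanLin_toLp_self] at h

lemma unitValues_re_inner_toEuclideanLin_ker (D : Matrix n n ℝ) (B : Matrix m n ℝ) :
    unitValues (fun v ↦ re (inner ℝ (D.toEuclideanLin v) v)) B.toEuclideanLin.ker =
      {x | ∃ v : n → ℝ, v ⬝ᵥ v = 1 ∧ B *ᵥ v = 0 ∧ x = v ⬝ᵥ D *ᵥ v} := by
  simp only [unitValues_euclideanSpace, toLp_mem_ker_toEuclideanLin, re_to_real,
    inner_toEuclideanLin_toLp_self]

lemma unitValues_re_inner_toEuclideanLin_top (D : Matrix n n ℝ) :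
    unitValues (fun v ↦ re (inner ℝ (D.toEuclideanLin v) v))
        (⊤ : Submodule ℝ (EuclideanSpace ℝ n)) =
      {x | ∃ v : n → ℝ, v ⬝ᵥ v = 1 ∧ x = v ⬝ᵥ D *ᵥ v} := by
  simp only [unitValues_euclideanSpace, Submodule.mem_top, true_and, re_to_real,
    inner_toEuclideanLin_toLp_self]

lemma unitValues_norm_toEuclideanLin_sq_ker_orthogonal [Fintype m] (B : Matrix m n ℝ) :
    unitValues (fun v ↦ ‖B.toEuclideanLin v‖ ^ 2) B.toEuclideanLin.kerᗮ =
      {x | ∃ v : n → ℝ, v ⬝ᵥ v = 1 ∧ (∀ w, B *ᵥ w = 0 → v ⬝ᵥ w = 0) ∧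
        x = v ⬝ᵥ (Bᵀ * B) *ᵥ v} := by
  simp only [unitValues_euclideanSpace, toLp_mem_ker_toEuclideanLin_orthogonal,
    norm_toEuclideanLin_toLp_sq]

lemma unitValues_re_inner_add_mul_norm_sq_top [Fintype m] (D : Matrix n n ℝ) (B : Matrix m n ℝ)
    (η : ℝ) :
    unitValues (fun v ↦ re (inner ℝ (D.toEuclideanLin v) v) + η * ‖B.toEuclideanLin v‖ ^ 2)
        (⊤ : Submodule ℝ (EuclideanSpace ℝ n)) =
      {x | ∃ v : n → ℝ, v ⬝ᵥ v = 1 ∧ x = v ⬝ᵥ (D + η • (Bᵀ * B)) *ᵥ v} := by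
  simp only [unitValues_euclideanSpace, Submodule.mem_top, true_and, re_to_real,
    inner_toEuclideanLin_toLp_self, norm_toEuclideanLin_toLp_sq, add_mulVec, smul_mulVec,
    dotProduct_add, dotProduct_smul, smul_eq_mul]

end Matrix


/-- Let `D` be symmetric positive definite and `B̃ ∈ ℝ^{n×(n+d)}`. With
`λ_ker` the minimum Rayleigh quotient of `D` over unit vectors in `ker B̃`,
`σ_B̃²` the minimum Rayleigh quotient of `B̃ᵀB̃` over unit vectors in the row space of `B̃`
(the orthogonal complement of `ker B̃`), `λ_min` the smallest eigenvalue of `D + ηB̃ᵀB̃`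
and `λ_max` the largest eigenvalue of `D` (both characterized by their Rayleigh
quotients), for any `η ≥ 0`:
`λ_min(D + ηB̃ᵀB̃) > λ_ker · min(1/8, ησ_B̃²/(8λ_max(D)))`. -/
theorem stmt8 {n d : ℕ} (D : Matrix (Fin (n + d)) (Fin (n + d)) ℝ)
    (Bt : Matrix (Fin n) (Fin (n + d)) ℝ)
    (hD : D.PosDef) (η : ℝ) (hη : 0 ≤ η)
    (lamKer sigB lamMin lamMax : ℝ)
    (hker : IsLeast {x | ∃ v : Fin (n + d) → ℝ,
        v ⬝ᵥ v = 1 ∧ Bt.mulVec v = 0 ∧ x = v ⬝ᵥ D.mulVec v} lamKer)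
    (hsig : IsLeast {x | ∃ v : Fin (n + d) → ℝ,
        v ⬝ᵥ v = 1 ∧ (∀ w : Fin (n + d) → ℝ, Bt.mulVec w = 0 → v ⬝ᵥ w = 0) ∧
        x = v ⬝ᵥ (Btᵀ * Bt).mulVec v} sigB)
    (hmin : IsLeast {x | ∃ v : Fin (n + d) → ℝ,
        v ⬝ᵥ v = 1 ∧ x = v ⬝ᵥ (D + η • (Btᵀ * Bt)).mulVec v} lamMin)
    (hmax : IsGreatest {x | ∃ v : Fin (n + d) → ℝ,
        v ⬝ᵥ v = 1 ∧ x = v ⬝ᵥ D.mulVec v} lamMax) :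
    lamKer * min (1 / 8) (η * sigB / (8 * lamMax)) < lamMin := by
  rw [← unitValues_re_inner_toEuclideanLin_ker] at hker
  rw [← unitValues_norm_toEuclideanLin_sq_ker_orthogonal] at hsig
  rw [← unitValues_re_inner_add_mul_norm_sq_top] at hmin
  rw [← unitValues_re_inner_toEuclideanLin_top] at hmax
  exact stmt8_general D.toEuclideanLin Bt.toEuclideanLin
    (fun _ ↦ re_inner_toEuclideanLin_self_pos hD) hη hker.isGLB hsig.isGLB hmin hmax.isLUB
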